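/- arXiv:2602.16046 — 4 statements merged into one kernel-verified Lean document; each statement's English description precedes it below -/
import Mathlib

section
/- Assume that the dominating number 𝔡 is regular (cf(𝔡) = 𝔡). Then every 𝔡-unbounded set A ⊆ [ω]^ω is ≤_U-unbounded for some free ultrafilter U on ℕ with 𝔟(U) = 𝔡. -/
open Cardinal

/-- `a ≤* b`: the set `[a ≤ b]` is cofinite. -/
def LeStar (a b : ℕ → ℕ) : Prop := {n | ¬ a n ≤ b n}.Finite

/-- `a ≤^∞ b`: the set `[a ≤ b]` is infinite. -/
def LeInf (a b : ℕ → ℕ) : Prop := {n | a n ≤ b n}.Infinite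

/-- `a ≤_U b`: the set `[a ≤ b]` belongs to the ultrafilter `U`. -/
def LeU (U : Ultrafilter ℕ) (a b : ℕ → ℕ) : Prop := {n | a n ≤ b n} ∈ U

/-- An ultrafilter is free if it extends the cofinite filter. -/
def Free (U : Ultrafilter ℕ) : Prop := (U : Filter ℕ) ≤ Filter.cofinite

/-- Elements of `[ω]^ω`, identified with their increasing enumerations. -/
abbrev IncSeq : Type := {f : ℕ → ℕ // StrictMono f}

/-- A subset of `[ω]^ω` is bounded if some element of `[ω]^ω` `≤*`-dominates it. -/
def Bounded (A : Set IncSeq) : Prop := ∃ b : IncSeq, ∀ a ∈ A, LeStar a.1 b.1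

/-- A subset of `[ω]^ω` is dominating if it `≤*`-dominates every element of `[ω]^ω`. -/
def Dominating (D : Set IncSeq) : Prop := ∀ a : IncSeq, ∃ d ∈ D, LeStar a.1 d.1

/-- A subset of `[ω]^ω` is `≤_U`-bounded if some element of `[ω]^ω` `≤_U`-dominates it. -/
def UBounded (U : Ultrafilter ℕ) (A : Set IncSeq) : Prop := ∃ b : IncSeq, ∀ a ∈ A, LeU U a.1 b.1

/-- `𝔟`: the least cardinality of an unbounded subset of `[ω]^ω`. -/
noncomputable def frakB : Cardinal := sInf {c | ∃ A : Set IncSeq, ¬ Bounded A ∧ c = #A}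

/-- `𝔡`: the least cardinality of a dominating subset of `[ω]^ω`. -/
noncomputable def frakD : Cardinal := sInf {c | ∃ D : Set IncSeq, Dominating D ∧ c = #D}

/-- `𝔟(U)`: the least cardinality of a `≤_U`-unbounded subset of `[ω]^ω`. -/
noncomputable def frakBU (U : Ultrafilter ℕ) : Cardinal :=
  sInf {c | ∃ A : Set IncSeq, ¬ UBounded U A ∧ c = #A}

/-- A set `A ⊆ [ω]^ω` is `𝔡`-unbounded if `|A| ≥ 𝔡` and every bounded subset of `A`
has cardinality less than `𝔡`. -/
def DUnbounded (A : Set IncSeq) : Prop :=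
  frakD ≤ #A ∧ ∀ B ⊆ A, Bounded B → #B < frakD

open Filter Set

/-- Every sequence lies below a strictly increasing one. -/
lemma exists_incSeq_ge (f : ℕ → ℕ) : ∃ b : IncSeq, ∀ n, f n ≤ b.1 n := by
  refine ⟨⟨fun n ↦ n + ∑ i ∈ Finset.range (n + 1), f i, strictMono_nat_of_lt_succ fun n ↦ ?_⟩,
    fun n ↦ ?_⟩
  · simp only [Finset.sum_range_succ _ (n + 1)]
    omega
  · simp only [Finset.sum_range_succ]
    omega

lemma aleph0_le_mk_of_dominating {D : Set IncSeq} (hD : Dominating D) : ℵ₀ ≤ #D := by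
  by_contra! h
  have hfin : D.Finite := lt_aleph0_iff_set_finite.1 h
  obtain ⟨a, ha⟩ := exists_incSeq_ge fun n ↦ ∑ d ∈ hfin.toFinset, d.1 n + 1
  obtain ⟨d, hd, had⟩ := hD a
  obtain ⟨n, hn⟩ := had.infinite_compl.nonempty
  have hle : a.1 n ≤ d.1 n := by simpa using hn
  have hsum : d.1 n ≤ ∑ d ∈ hfin.toFinset, d.1 n :=
    Finset.single_le_sum (f := fun d : IncSeq ↦ d.1 n) (fun _ _ ↦ Nat.zero_le _)
      (hfin.mem_toFinset.2 hd)
  have := ha n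
  omega

lemma exists_dominating_mk_eq_frakD : ∃ D : Set IncSeq, Dominating D ∧ frakD = #D :=
  csInf_mem (s := {c | ∃ D : Set IncSeq, Dominating D ∧ c = #D})
    ⟨_, univ, fun a ↦ ⟨a, mem_univ a, by simp [LeStar]⟩, rfl⟩

lemma isRegular_frakD (hreg : frakD.ord.cof = frakD) : frakD.IsRegular := by
  refine ⟨?_, hreg.ge⟩
  obtain ⟨D, hD, hcard⟩ := exists_dominating_mk_eq_frakD
  exact hcard ▸ aleph0_le_mk_of_dominating hD

/-- The increasing sequences that are eventually below `g` on an infinite set form a bounded set. -/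
lemma bounded_setOf_finite_le {Z : Set ℕ} (hZ : Z.Infinite) (g : ℕ → ℕ) :
    Bounded {a | {n ∈ Z | g n ≤ a.1 n}.Finite} := by
  choose next hmem hlt using fun n ↦ hZ.exists_gt n
  obtain ⟨b, hb⟩ := exists_incSeq_ge fun n ↦ g (next n)
  refine ⟨b, fun a ha ↦ ?_⟩
  obtain ⟨N, hN⟩ := Set.Finite.bddAbove ha
  refine (finite_Iic N).subset fun n hn ↦ ?_
  have hn : ¬ a.1 n ≤ b.1 n := hn
  have hmono := a.2 (hlt n)
  have hle : next n ≤ N := hN ⟨hmem n, by have := hb n; omega⟩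
  exact (hlt n).le.trans hle

lemma DUnbounded.exists_infinite_le {A : Set IncSeq} (hA : DUnbounded A) (hreg : frakD.IsRegular)
    {J : Type} (hJ : #J < frakD) (Z : J → Set ℕ) (g : J → ℕ → ℕ) :
    ∃ a ∈ A, ∀ j, (Z j).Infinite → {n ∈ Z j | g j n ≤ a.1 n}.Infinite := by
  by_contra! h
  let bad (j : J) : Set IncSeq := {a ∈ A | (Z j).Infinite ∧ {n ∈ Z j | g j n ≤ a.1 n}.Finite}
  have hbad (j : J) : #(bad j) < frakD := by
    by_cases hj : (Z j).Infinite
    · obtain ⟨b, hb⟩ := bounded_setOf_finite_le hj (g j)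
      exact hA.2 _ (fun a ha ↦ ha.1) ⟨b, fun a ha ↦ hb a ha.2.2⟩
    · have : bad j = ∅ := by simp [bad, hj]
      simpa [this] using hreg.pos
  have hcover : A ⊆ ⋃ j, bad j := fun a ha ↦ by
    obtain ⟨j, hj, hfin⟩ := h a ha
    exact mem_iUnion.2 ⟨j, ha, hj, by simpa using hfin⟩
  exact (hA.1.trans (mk_le_mk_of_subset hcover)).not_gt
    ((card_iUnion_lt_iff_forall_of_isRegular hreg hJ).2 hbad)

lemma mk_finset_lt {c : Cardinal} (hc : ℵ₀ ≤ c) {α : Type} (h : #α < c) : #(Finset α) < c := by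
  cases finite_or_infinite α
  · exact (lt_aleph0_of_finite _).trans_le hc
  · rwa [mk_finset_of_infinite]

/-- The places where, along `F`, each `x j` is above all the earlier `x i` and `e i`. -/
def chainSet {I : Type} [LT I] (e x : I → IncSeq) (F : Finset I) : Set ℕ :=
  {n | ∀ i ∈ F, ∀ j ∈ F, i < j → (x i).1 n ≤ (x j).1 n ∧ (e i).1 n ≤ (x j).1 n}

lemma DUnbounded.exists_chain {A : Set IncSeq} (hA : DUnbounded A) (hreg : frakD.IsRegular)
    {I : Type} [LinearOrder I] [WellFoundedLT I] (hI : ∀ i : I, #(Iio i) < frakD)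
    (e : I → IncSeq) :
    ∃ x : I → IncSeq, (∀ i, x i ∈ A) ∧ ∀ F : Finset I, (chainSet e x F).Infinite := by
  have step (i : I) (y : ∀ j, j < i → IncSeq) : ∃ a ∈ A, ∀ F : Finset (Iio i),
      (chainSet (fun j ↦ e j.1) (fun j ↦ y j.1 j.2) F).Infinite →
      {n ∈ chainSet (fun j ↦ e j.1) (fun j ↦ y j.1 j.2) F |
        ∑ j ∈ F, ((y j.1 j.2).1 n + (e j.1).1 n) ≤ a.1 n}.Infinite :=
    hA.exists_infinite_le hreg (mk_finset_lt hreg.aleph0_le (hI i)) _ _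
  choose next hnextA hnext using step
  let x : I → IncSeq := (wellFounded_lt (α := I)).fix next
  have hx (i : I) : x i = next i fun j _ ↦ x j := WellFounded.fix_eq _ _ _
  refine ⟨x, fun i ↦ by rw [hx]; exact hnextA _ _, fun F ↦ ?_⟩
  induction F using Finset.induction_on_max with
  | empty => simpa [chainSet] using infinite_univ
  | insert i F hF ih =>
    let G : Finset (Iio i) := F.subtype (· ∈ Iio i)
    have hG {j : I} (hj : j ∈ F) : (⟨j, hF j hj⟩ : Iio i) ∈ G := by simpa [G] using hj
    have hle : chainSet e x F ⊆ chainSet (fun j : Iio i ↦ e j.1) (fun j : Iio i ↦ x j.1) G :=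
      fun n hn j hj k hk hjk ↦ hn j (by simpa [G] using hj) k (by simpa [G] using hk) hjk
    refine (hnext i (fun j _ ↦ x j) G (ih.mono hle)).mono ?_
    rw [← hx]
    rintro n ⟨hn, hsum⟩ j hj k hk hjk
    have htop {j : I} (hj : j ∈ F) : (x j).1 n + (e j).1 n ≤ (x i).1 n :=
      (Finset.single_le_sum (f := fun j : Iio i ↦ (x j.1).1 n + (e j.1).1 n)
        (fun _ _ ↦ Nat.zero_le _) (hG hj)).trans hsum
    rcases Finset.mem_insert.1 hj with rfl | hj' <;> rcases Finset.mem_insert.1 hk with rfl | hk'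
    · exact absurd hjk (lt_irrefl _)
    · exact absurd hjk (hF k hk').not_gt
    · have := htop hj'
      omega
    · exact hn ⟨j, hF j hj'⟩ (hG hj') ⟨k, hF k hk'⟩ (hG hk') hjk

lemma exists_free_ultrafilter_chainSet {I : Type} [LinearOrder I] (e x : I → IncSeq)
    (h : ∀ F : Finset I, (chainSet e x F).Infinite) :
    ∃ U : Ultrafilter ℕ, Free U ∧ ∀ F, chainSet e x F ∈ U := by
  have hne : (⨅ F : Finset I, cofinite ⊓ 𝓟 (chainSet e x F)).NeBot := by
    have anti {F G : Finset I} (hFG : F ⊆ G) : chainSet e x G ⊆ chainSet e x F :=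
      fun n hn i hi j hj hij ↦ hn i (hFG hi) j (hFG hj) hij
    refine iInf_neBot_of_directed' (fun F G ↦ ⟨F ∪ G, ?_, ?_⟩)
      fun F ↦ (h F).cofinite_inf_principal_neBot
    · exact inf_le_inf_left _ (principal_mono.2 (anti Finset.subset_union_left))
    · exact inf_le_inf_left _ (principal_mono.2 (anti Finset.subset_union_right))
  refine ⟨Ultrafilter.of (⨅ F : Finset I, cofinite ⊓ 𝓟 (chainSet e x F)), ?_, fun F ↦ ?_⟩
  · exact (Ultrafilter.of_le _).trans ((iInf_le _ ∅).trans inf_le_left)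
  · exact (Ultrafilter.of_le _).trans ((iInf_le _ F).trans inf_le_right) (mem_principal_self _)

lemma LeU.trans {U : Ultrafilter ℕ} {a b c : ℕ → ℕ} (h : LeU U a b) (h' : LeU U b c) :
    LeU U a c :=
  mem_of_superset (inter_mem h h') fun n hn ↦ (le_trans hn.1 hn.2 : a n ≤ c n)

lemma LeStar.leU {U : Ultrafilter ℕ} (hU : Free U) {a b : ℕ → ℕ} (h : LeStar a b) : LeU U a b :=
  hU (by simpa [mem_cofinite, compl_ofPred, LeStar] using h)

/-- A dominating set is unbounded modulo every free ultrafilter. -/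
lemma Dominating.not_uBounded {U : Ultrafilter ℕ} (hU : Free U) {D : Set IncSeq}
    (hD : Dominating D) : ¬ UBounded U D := by
  rintro ⟨b, hb⟩
  obtain ⟨d, hd, hbd⟩ := hD ⟨fun n ↦ b.1 n + 1, fun _ _ h ↦ Nat.succ_lt_succ (b.2 h)⟩
  obtain ⟨n, hn⟩ := U.nonempty_of_mem ((hbd.leU hU).trans (hb d hd))
  exact Nat.not_succ_le_self _ hn

/-- if `cf(𝔡) = 𝔡`, then every `𝔡`-unbounded set `A ⊆ [ω]^ω` is
`≤_U`-unbounded for some free ultrafilter `U` with `𝔟(U) = 𝔡`. -/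
theorem stmt0 (hreg : frakD.ord.cof = frakD)
    (A : Set IncSeq) (hA : DUnbounded A) :
    ∃ U : Ultrafilter ℕ, Free U ∧ ¬ UBounded U A ∧ frakBU U = frakD := by
  have hR := isRegular_frakD hreg
  obtain ⟨D, hD, hcard⟩ := exists_dominating_mk_eq_frakD
  let I := frakD.ord.ToType
  obtain ⟨e⟩ : Nonempty (I ≃ D) := Cardinal.eq.1 (by rw [mk_ord_toType, hcard])
  have hI (i : I) : #(Iio i) < frakD := by
    simpa [I] using mk_Iio_lt i (by simp [I])
  obtain ⟨x, hxA, hx⟩ := hA.exists_chain hR (I := I) hI fun i ↦ (e i).1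
  obtain ⟨U, hU, hchain⟩ := exists_free_ultrafilter_chainSet _ x hx
  have hex {i j : I} (hij : i < j) : LeU U (e i).1.1 (x j).1 :=
    mem_of_superset (hchain {i, j}) fun n hn ↦ (hn i (by simp) j (by simp) hij).2
  have hle (b : IncSeq) : ∃ i : I, LeU U b.1 (e i).1.1 := by
    obtain ⟨d, hd, hbd⟩ := hD b
    exact ⟨e.symm ⟨d, hd⟩, by simpa using hbd.leU hU⟩
  choose idx hidx using hle
  have hbdd (S : Set IncSeq) (hS : #S < frakD) : ∃ j, ∀ b ∈ S, LeU U b.1 (x j).1 := by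
    have hcof : ¬ IsCofinal (idx '' S) := fun hc ↦ by
      have h := Order.cof_le hc
      rw [Ordinal.cof_toType, hreg] at h
      exact (h.trans mk_image_le).not_gt hS
    simp only [IsCofinal, not_forall, not_exists, not_and, not_le] at hcof
    obtain ⟨j, hj⟩ := hcof
    exact ⟨j, fun b hb ↦ (hidx b).trans (hex (hj _ (mem_image_of_mem idx hb)))⟩
  refine ⟨U, hU, ?_, le_antisymm ?_ ?_⟩
  · rintro ⟨b, hb⟩
    refine hD.not_uBounded hU ⟨b, fun d _ ↦ ?_⟩
    obtain ⟨j, hj⟩ := hbdd {d} (by simpa using hR.nat_lt 1)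
    exact (hj d rfl).trans (hb _ (hxA j))
  · exact csInf_le' ⟨D, hD.not_uBounded hU, hcard⟩
  · refine le_csInf ⟨_, D, hD.not_uBounded hU, rfl⟩ ?_
    rintro _ ⟨S, hS, rfl⟩
    by_contra! hlt
    obtain ⟨j, hj⟩ := hbdd S hlt
    exact hS ⟨x j, hj⟩
end

section
/- Assume that the dominating number 𝔡 is regular (cf(𝔡) = 𝔡). Let A ⊆ [ω]^ω be 𝔡-unbounded and let C ⊆ [ω]^ω have cardinality less than 𝔡. Then there exists a ∈ A such that c ≤^∞ a for every c ∈ C. -/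
open Cardinal

/-- if `cf(𝔡) = 𝔡`, `A ⊆ [ω]^ω` is `𝔡`-unbounded and `C ⊆ [ω]^ω` has
cardinality less than `𝔡`, then there is `a ∈ A` with `c ≤^∞ a` for every `c ∈ C`. -/
theorem stmt1 (hreg : frakD.ord.cof = frakD)
    (A : Set IncSeq) (hA : DUnbounded A)
    (C : Set IncSeq) (hC : #C < frakD) :
    ∃ a ∈ A, ∀ c ∈ C, LeInf c.1 a.1 := by
  rcases le_or_gt frakD 1 with hle | hlt
  · have hC0 : #C = 0 := Cardinal.lt_one_iff.1 (hC.trans_le hle)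
    have hA0 : #A ≠ 0 := (zero_le.trans_lt (hC.trans_le hA.1)).ne'
    obtain ⟨a, ha⟩ := Cardinal.mk_ne_zero_iff.1 hA0
    exact ⟨a, ha, fun c hc => absurd hc (by simp [Cardinal.mk_set_eq_zero_iff.1 hC0])⟩
  · have hR : frakD.IsRegular := ⟨by
      rw [← hreg] at hlt ⊢
      exact Ordinal.aleph0_le_cof_iff.2 hlt, hreg.ge⟩
    by_contra! h
    have hcover : A ⊆ ⋃ c ∈ C, {a ∈ A | LeStar a.1 c.1} := by
      intro a ha
      obtain ⟨c, hc, hac⟩ := h a ha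
      exact Set.mem_biUnion hc
        ⟨ha, (Set.not_infinite.1 hac).subset fun n hn => (not_le.1 hn).le⟩
    have hsmall : #(⋃ c ∈ C, {a ∈ A | LeStar a.1 c.1}) < frakD :=
      (Cardinal.card_biUnion_lt_iff_forall_of_isRegular hR hC).2 fun c _ =>
        hA.2 _ (Set.sep_subset _ _) ⟨c, fun _ ha => ha.2⟩
    exact (hA.1.trans (Cardinal.mk_le_mk_of_subset hcover)).not_gt hsmall
end

section
/- Let U be a free ultrafilter on ℕ with 𝔟(U) = 𝔡 and let {a_α : α < 𝔡} ⊆ [ω]^ω be a U-scale such that a_α ≤_U a_β whenever α ≤ β < 𝔡. For a, b ∈ [ω]^ω let a ⊎ b := {2k : k ∈ a} ∪ {2k+1 : k ∈ b}. Then the set {a_α ⊎ a_α : α < 𝔡} is a 2U-scale. -/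
open Cardinal

/-- Subsets of `ℕ` are identified with their characteristic functions `ℕ → Bool`;
this way `P(ℕ)` is the Cantor cube `2^ℕ`, carrying the product topology. -/
abbrev CSet : Type := ℕ → Bool

/-- The subset of `ℕ` coded by `a : CSet`. -/
def supp (a : CSet) : Set ℕ := {n | a n = true}

/-- `a ∈ [ω]^ω`: the coded set is infinite. -/
def InfS (a : CSet) : Prop := (supp a).Infinite

/-- The increasing enumeration of the set coded by `a`. -/
noncomputable def enum (a : CSet) : ℕ → ℕ := Nat.nth (fun n => a n = true)

/-- `a ≤* b`: the set `[a ≤ b]` (computed on increasing enumerations) is cofinite. -/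
def LeStarS (a b : CSet) : Prop := {n | ¬ enum a n ≤ enum b n}.Finite

/-- `a ≤_U b`: the set `[a ≤ b]` (computed on increasing enumerations) is in `U`. -/
def LeUS (U : Ultrafilter ℕ) (a b : CSet) : Prop := {n | enum a n ≤ enum b n} ∈ U

/-- A subset of `[ω]^ω` is bounded if some element of `[ω]^ω` `≤*`-dominates it. -/
def BoundedS (A : Set CSet) : Prop := ∃ b : CSet, InfS b ∧ ∀ a ∈ A, LeStarS a b

/-- A subset of `[ω]^ω` is `≤_U`-bounded if some element of `[ω]^ω` `≤_U`-dominates it. -/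
def UBoundedS (U : Ultrafilter ℕ) (A : Set CSet) : Prop :=
  ∃ b : CSet, InfS b ∧ ∀ a ∈ A, LeUS U a b

/-- `D ⊆ [ω]^ω` is dominating if it `≤*`-dominates every element of `[ω]^ω`. -/
def DominatingS (D : Set CSet) : Prop :=
  (∀ d ∈ D, InfS d) ∧ ∀ a : CSet, InfS a → ∃ d ∈ D, LeStarS a d

/-- `𝔡`: the least cardinality of a dominating subset of `[ω]^ω`. -/
noncomputable def frakDS : Cardinal := sInf {c | ∃ D : Set CSet, DominatingS D ∧ c = #D}

/-- `𝔟(U)`: the least cardinality of a `≤_U`-unbounded subset of `[ω]^ω`. -/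
noncomputable def frakBUS (U : Ultrafilter ℕ) : Cardinal :=
  sInf {c | ∃ A : Set CSet, (∀ a ∈ A, InfS a) ∧ ¬ UBoundedS U A ∧ c = #A}

/-- `Y ⊆ [ω]^ω` is a `U`-scale if for every `b ∈ [ω]^ω` the relation `b ≤_U y` holds
for all but fewer than `𝔟(U)` many `y ∈ Y`. -/
def UScaleS (U : Ultrafilter ℕ) (Y : Set CSet) : Prop :=
  (∀ y ∈ Y, InfS y) ∧
    ∀ b : CSet, InfS b → #({y ∈ Y | ¬ LeUS U b y} : Set CSet) < frakBUS U

/-- `Fin`: the family of (codes of) finite subsets of `ℕ`. -/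
def FinS : Set CSet := {a | (supp a).Finite}

/-- `2u := {2n : n ∈ u}` on codes. -/
def double (x : CSet) : CSet := fun n => if n % 2 = 0 then x (n / 2) else false

/-- `a ⊎ b := {2k : k ∈ a} ∪ {2k+1 : k ∈ b}` on codes. -/
def uplus (a b : CSet) : CSet := fun n => if n % 2 = 0 then a (n / 2) else b (n / 2)

/-- Symmetric difference `⊕` on codes. -/
def symmD (a b : CSet) : CSet := fun n => xor (a n) (b n)

/-- `2U`: the ultrafilter generated by `{2u : u ∈ U}`, i.e. the pushforward of `U`
under `n ↦ 2n`. -/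
def twoU (U : Ultrafilter ℕ) : Ultrafilter ℕ := U.map (fun n => 2 * n)

theorem enum_strictMono {a : CSet} (ha : InfS a) : StrictMono (enum a) :=
  Nat.nth_strictMono ha

theorem range_enum {a : CSet} (ha : InfS a) : Set.range (enum a) = supp a :=
  Nat.range_nth_of_infinite ha

theorem infS_of_strictMono {f : ℕ → ℕ} (hf : StrictMono f) {a : CSet}
    (h : supp a = Set.range f) : InfS a := by
  unfold InfS
  rw [h]
  exact Set.infinite_range_of_injective hf.injective

theorem enum_eq_of_strictMono {f : ℕ → ℕ} (hf : StrictMono f) {a : CSet}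
    (h : supp a = Set.range f) : enum a = f := by
  have ha := infS_of_strictMono hf h
  exact ((enum_strictMono ha).range_inj hf).1 ((range_enum ha).trans h)

/-- The code of the range of `f`. -/
noncomputable def rangeCode (f : ℕ → ℕ) : CSet :=
  open scoped Classical in fun n => decide (n ∈ Set.range f)

theorem supp_rangeCode (f : ℕ → ℕ) : supp (rangeCode f) = Set.range f := by
  ext n
  simp [supp, rangeCode]

/-- The set of elements of `a` with even index in the increasing enumeration. -/
noncomputable def evenPart (a : CSet) : CSet := rangeCode fun n => enum a (2 * n)

theorem strictMono_enum_two_mul {a : CSet} (ha : InfS a) :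
    StrictMono fun n => enum a (2 * n) :=
  fun _ _ h => enum_strictMono ha (by omega)

theorem infS_evenPart {a : CSet} (ha : InfS a) : InfS (evenPart a) :=
  infS_of_strictMono (strictMono_enum_two_mul ha) (supp_rangeCode _)

theorem enum_evenPart {a : CSet} (ha : InfS a) (n : ℕ) :
    enum (evenPart a) n = enum a (2 * n) :=
  congrFun (enum_eq_of_strictMono (strictMono_enum_two_mul ha) (supp_rangeCode _)) n

theorem strictMono_two_mul_enum {a : CSet} (ha : InfS a) :
    StrictMono fun n => 2 * enum a (n / 2) + n % 2 := by
  refine strictMono_nat_of_lt_succ fun n => ?_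
  rcases Nat.even_or_odd' n with ⟨k, rfl | rfl⟩
  · have h₁ : (2 * k + 1) / 2 = k := by omega
    have h₂ : 2 * k / 2 = k := by omega
    simp only [h₁, h₂]
    omega
  · have h₁ : (2 * k + 1) / 2 = k := by omega
    have h₂ : (2 * k + 1 + 1) / 2 = k + 1 := by omega
    have := enum_strictMono ha (Nat.lt_add_one k)
    simp only [h₁, h₂]
    omega

theorem supp_uplus_self {a : CSet} (ha : InfS a) :
    supp (uplus a a) = Set.range fun n => 2 * enum a (n / 2) + n % 2 := by
  have hmem (m : ℕ) : a m = true ↔ ∃ k, enum a k = m :=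
    (Set.ext_iff.1 (range_enum ha) m).symm
  ext m
  have h : m ∈ supp (uplus a a) ↔ a (m / 2) = true := by simp [supp, uplus]
  rw [h, hmem]
  constructor
  · rintro ⟨k, hk⟩
    refine ⟨2 * k + m % 2, ?_⟩
    have : (2 * k + m % 2) / 2 = k := by omega
    simp only [this]
    omega
  · rintro ⟨n, rfl⟩
    exact ⟨n / 2, by dsimp only; omega⟩

theorem infS_uplus_self {a : CSet} (ha : InfS a) : InfS (uplus a a) :=
  infS_of_strictMono (strictMono_two_mul_enum ha) (supp_uplus_self ha)

theorem enum_uplus_self {a : CSet} (ha : InfS a) (n : ℕ) :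
    enum (uplus a a) (2 * n) = 2 * enum a n := by
  rw [enum_eq_of_strictMono (strictMono_two_mul_enum ha) (supp_uplus_self ha)]
  simp

theorem leUS_twoU_uplus_self {U : Ultrafilter ℕ} {a b : CSet} (ha : InfS a) (hb : InfS b)
    (h : LeUS U (evenPart b) a) : LeUS (twoU U) b (uplus a a) := by
  refine Ultrafilter.mem_map.2 (Filter.mem_of_superset h fun n hn => ?_)
  have hn' : enum b (2 * n) ≤ enum a n := enum_evenPart hb n ▸ hn
  change enum b (2 * n) ≤ enum (uplus a a) (2 * n)
  rw [enum_uplus_self ha]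
  omega

theorem not_uBoundedS_infS (U : Ultrafilter ℕ) : ¬ UBoundedS U {a | InfS a} := by
  rintro ⟨b, hb, h⟩
  have hf : StrictMono fun n => enum b n + 1 :=
    fun _ _ hmn => Nat.succ_lt_succ (enum_strictMono hb hmn)
  have hle := h _ (infS_of_strictMono hf (supp_rangeCode _))
  unfold LeUS at hle
  rw [enum_eq_of_strictMono hf (supp_rangeCode _)] at hle
  simp at hle

theorem frakBUS_le_frakBUS_twoU (U : Ultrafilter ℕ) : frakBUS U ≤ frakBUS (twoU U) := by
  refine le_csInf ⟨_, {a | InfS a}, fun _ h => h, not_uBoundedS_infS _, rfl⟩ ?_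
  rintro _ ⟨A, hA, hunb, rfl⟩
  suffices h : frakBUS U ≤ #(evenPart '' A) from h.trans mk_image_le
  refine csInf_le' ⟨evenPart '' A, ?_, ?_, rfl⟩
  · rintro _ ⟨a, ha, rfl⟩
    exact infS_evenPart (hA a ha)
  · rintro ⟨b, hb, h⟩
    exact hunb ⟨uplus b b, infS_uplus_self hb, fun a ha =>
      leUS_twoU_uplus_self hb (hA a ha) (h _ ⟨a, ha, rfl⟩)⟩

/-- if `U` is free with `𝔟(U) = 𝔡` and `{a_α : α < 𝔡}` is a `U`-scale
with `a_α ≤_U a_β` for `α ≤ β < 𝔡`, then `{a_α ⊎ a_α : α < 𝔡}` is a `2U`-scale. -/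
theorem stmt4 (U : Ultrafilter ℕ) (hU : Free U) (hbd : frakBUS U = frakDS)
    (a : ↥(Set.Iio frakDS.ord) → CSet) (hainf : ∀ α, InfS (a α))
    (hscale : UScaleS U (Set.range a))
    (hmono : ∀ α β : ↥(Set.Iio frakDS.ord), α ≤ β → LeUS U (a α) (a β)) :
    UScaleS (twoU U) (Set.range fun α => uplus (a α) (a α)) := by
  refine ⟨?_, fun b hb => ?_⟩
  · rintro _ ⟨α, rfl⟩
    exact infS_uplus_self (hainf α)
  · have hsub : {y ∈ Set.range fun α => uplus (a α) (a α) | ¬ LeUS (twoU U) b y} ⊆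
        (fun y => uplus y y) '' {y ∈ Set.range a | ¬ LeUS U (evenPart b) y} := by
      rintro _ ⟨⟨α, rfl⟩, hα⟩
      exact ⟨a α, ⟨⟨α, rfl⟩, fun h => hα (leUS_twoU_uplus_self (hainf α) hb h)⟩, rfl⟩
    exact (((mk_le_mk_of_subset hsub).trans mk_image_le).trans_lt
      (hscale.2 _ (infS_evenPart hb))).trans_le (frakBUS_le_frakBUS_twoU U)
end

section
/- Let X ⊆ [ω]^ω, let {d_α : α < 𝔡} ⊆ [ω]^ω be a dominating set, let {a_α : α < 𝔡} ⊆ X, and for each α < 𝔡 let d'_α ∈ [ω]^ω satisfy a_α(n) ≤ d'_α(n) and d_α(n) ≤ d'_α(n) for all n. Put Y := {a_α ⊎ d'_α : α < 𝔡}, where a ⊎ b := {2k : k ∈ a} ∪ {2k+1 : k ∈ b}. Then the set (2X) ⊕ (Y ∪ Fin) := {2x ⊕ y : x ∈ X, y ∈ Y ∪ Fin} is contained in [ω]^ω and is a dominating subset of [ω]^ω, where 2x := {2n : n ∈ x} and ⊕ denotes symmetric difference of subsets of ℕ. -/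
open Cardinal

/-- The set coded by `z` is infinite as soon as it contains `2k + 1` for infinitely many `k`. -/
theorem InfS.of_odd {b z : CSet} (hb : InfS b) (h : ∀ k, z (2 * k + 1) = b k) : InfS z := by
  refine (hb.image (f := fun k => 2 * k + 1) fun k _ l _ hkl => ?_).mono ?_
  · simpa using hkl
  · rintro _ ⟨k, hk, rfl⟩
    exact (h k).trans hk

theorem InfS.double {x : CSet} (hx : InfS x) : InfS (double x) := by
  refine (hx.image (f := fun k => 2 * k) fun k _ l _ hkl => ?_).mono ?_
  · simpa using hkl
  · rintro _ ⟨k, hk, rfl⟩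
    simpa [supp, _root_.double] using hk

/-- Changing an infinite set by a finite set leaves it infinite. -/
theorem InfS.symmD_of_mem_FinS {z y : CSet} (hz : InfS z) (hy : y ∈ FinS) :
    InfS (symmD z y) := by
  refine (Set.Infinite.sdiff hz hy).mono ?_
  rintro n ⟨hn, hny⟩
  simp only [supp, Set.mem_ofPred_eq, Bool.not_eq_true] at hn hny
  simp [supp, symmD, hn, hny]

theorem symmD_double_uplus_odd (x a b : CSet) (k : ℕ) :
    symmD (double x) (uplus a b) (2 * k + 1) = b k := by
  have h₁ : (2 * k + 1) % 2 = 1 := by omega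
  have h₂ : (2 * k + 1) / 2 = k := by omega
  simp [symmD, double, uplus, h₁, h₂]

theorem enum_symmD_double_uplus_self (a : CSet) {b : CSet} (hb : InfS b) (n : ℕ) :
    enum (symmD (double a) (uplus a b)) n = 2 * enum b n + 1 := by
  have hinf : InfS (symmD (double a) (uplus a b)) :=
    hb.of_odd (symmD_double_uplus_odd a a b)
  have key := Nat.nth_comp_of_strictMono (f := fun k => 2 * k + 1)
    (p := fun m => symmD (double a) (uplus a b) m = true) (n := n)
    (fun k l hkl => by dsimp only; omega)
    (fun m hm => by
      rcases Nat.mod_two_eq_zero_or_one m with h | h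
      · simp [symmD, double, uplus, h] at hm
      · exact ⟨m / 2, by dsimp only; omega⟩)
    (fun hfin => absurd hfin hinf)
  simpa only [enum, symmD_double_uplus_odd] using key.symm

/-- with `{d_α : α < 𝔡}` dominating, `{a_α : α < 𝔡} ⊆ X ⊆ [ω]^ω`,
`d'_α ∈ [ω]^ω` pointwise above `a_α` and `d_α`, and `Y := {a_α ⊎ d'_α : α < 𝔡}`,
the set `(2X) ⊕ (Y ∪ Fin)` is a dominating subset of `[ω]^ω`. -/
theorem stmt5 (X : Set CSet) (hX : ∀ x ∈ X, InfS x)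
    (d : ↥(Set.Iio frakDS.ord) → CSet) (hd : DominatingS (Set.range d))
    (a : ↥(Set.Iio frakDS.ord) → CSet) (ha : ∀ α, a α ∈ X)
    (d' : ↥(Set.Iio frakDS.ord) → CSet) (hd'inf : ∀ α, InfS (d' α))
    (hle : ∀ α n, enum (a α) n ≤ enum (d' α) n ∧ enum (d α) n ≤ enum (d' α) n) :
    DominatingS
      {z | ∃ x ∈ X, ∃ y ∈ (Set.range fun α => uplus (a α) (d' α)) ∪ FinS,
        z = symmD (double x) y} := by
  constructor
  · rintro z ⟨x, hx, y, ⟨α, rfl⟩ | hy, rfl⟩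
    · exact (hd'inf α).of_odd (symmD_double_uplus_odd x (a α) (d' α))
    · exact (hX x hx).double.symmD_of_mem_FinS hy
  · intro b hb
    obtain ⟨_, ⟨α, rfl⟩, hα⟩ := hd.2 b hb
    refine ⟨_, ⟨a α, ha α, _, Or.inl ⟨α, rfl⟩, rfl⟩, hα.subset ?_⟩
    intro n hn hbd
    apply hn
    have h := (hle α n).2
    rw [enum_symmD_double_uplus_self (a α) (hd'inf α)]
    omega
end
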